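/- Let K and L be nonzero positive semidefinite operators on a finite-dimensional complex Hilbert space and let s ∈ (0,1). Then Tr[K (K+L)^{-1/2} L (K+L)^{-1/2}] ≤ Tr[K^{1-s} L^{s}], where (K+L)^{-1/2} denotes the inverse square root of K+L on its support (Moore–Penrose convention) and fractional powers of positive semidefinite operators are taken by functional calculus on their supports (with 0^t := 0). -/

import Mathlib

/-!
Both sides are compared with `Tr K - Tr (K - L)₊`, where `(K - L)₊` is the positive part.

* `trace_pgm_le`. Let `T = K + L` and `P = T^{-1/2} K T^{-1/2}`, and let `⟨X, Y⟩ = Tr[T^{1/2} X T^{1/2} Y]`,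
  a positive semidefinite form on Hermitian matrices. The left-hand side equals `Tr K - ⟨P, P⟩`.
  For every orthogonal projection `E`, expanding `⟨P - E, P - E⟩ ≥ 0` and using
  `⟨P, E⟩ = Tr[K E]` and `⟨E, E⟩ ≤ ⟨E, 1⟩ = Tr[T E]` gives `⟨P, P⟩ ≥ Tr[(K - L) E]`. Taking for `E` the
  spectral projection of `K - L` onto `(0, ∞)` gives the bound `Tr K - Tr (K - L)₊`.
* `trace_le_of_posPart`. This is Audenaert's inequality
  `Tr K - Tr (K - L)₊ ≤ Tr[K^{1-s} L^s]`, proved by Ozawa's argument: `C = L + (K - L)₊`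
  dominates both `K` and `L`, so the Löwner–Heinz inequality (operator monotonicity of `x ^ t` for
  `0 ≤ t ≤ 1`) applies to both pairs.
-/

open scoped BigOperators Kronecker ComplexOrder
open Matrix

noncomputable section

/-- Fractional power (functional calculus on the support, `0^t := 0` for `t ≠ 0`,
which also implements the Moore–Penrose pseudo-inverse convention for negative
exponents) of a Hermitian matrix; junk value `0` for non-Hermitian matrices. -/
noncomputable def mrpow {m : Type*} [Fintype m] [DecidableEq m]
    (A : Matrix m m ℂ) (t : ℝ) : Matrix m m ℂ :=
  if hA : A.IsHermitian then
    (hA.eigenvectorUnitary : Matrix m m ℂ) *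
      Matrix.diagonal (fun i => ((hA.eigenvalues i ^ t : ℝ) : ℂ)) *
      star (hA.eigenvectorUnitary : Matrix m m ℂ)
  else 0

/-- Matrix logarithm on the support (eigenvalue `0 ↦ 0`, since `Real.log 0 = 0`)
of a Hermitian matrix; junk value `0` otherwise. -/
noncomputable def mlog {m : Type*} [Fintype m] [DecidableEq m]
    (A : Matrix m m ℂ) : Matrix m m ℂ :=
  if hA : A.IsHermitian then
    (hA.eigenvectorUnitary : Matrix m m ℂ) *
      Matrix.diagonal (fun i => ((Real.log (hA.eigenvalues i) : ℝ) : ℂ)) *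
      star (hA.eigenvectorUnitary : Matrix m m ℂ)
  else 0

/-- Trace norm `‖A‖₁ = Tr √(AᴴA)`. -/
noncomputable def traceNorm {m : Type*} [Fintype m] [DecidableEq m]
    (A : Matrix m m ℂ) : ℝ :=
  ((mrpow (Aᴴ * A) (1/2)).trace).re

section

open scoped MatrixOrder Matrix.Norms.L2Operator

variable {m : Type*} [Fintype m] [DecidableEq m]

/-- Identifies `mrpow` with Mathlib's continuous functional calculus. -/
theorem mrpow_eq_cfc {A : Matrix m m ℂ} (hA : A.IsHermitian) (t : ℝ) :
    mrpow A t = cfc (fun x : ℝ => x ^ t) A := by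
  rw [hA.cfc_eq, mrpow, dif_pos hA]
  rfl

/-- The spectrum is finite, so the continuity side conditions of the functional calculus hold for
every function, in particular for step functions and negative powers. -/
theorem continuousOn_matrix_spectrum (A : Matrix m m ℂ) (f : ℝ → ℝ) :
    ContinuousOn f (spectrum ℝ A) :=
  (Matrix.finite_real_spectrum (A := A)).continuousOn f

theorem mrpow_mul_mrpow {A : Matrix m m ℂ} (hA : A.PosSemidef) {s t : ℝ} (hs : s ≠ 0)
    (ht : t ≠ 0) (hst : s + t = 1) : mrpow A s * mrpow A t = A := by
  have hA' : IsSelfAdjoint A := hA.1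
  rw [mrpow_eq_cfc hA.1, mrpow_eq_cfc hA.1,
    ← cfc_mul _ _ A (continuousOn_matrix_spectrum A _) (continuousOn_matrix_spectrum A _)]
  conv_rhs => rw [← cfc_id ℝ A]
  refine cfc_congr fun x hx => ?_
  have hx0 : 0 ≤ x := spectrum_nonneg_of_nonneg (nonneg_iff_posSemidef.2 hA) hx
  rcases hx0.eq_or_lt with rfl | h
  · simp [Real.zero_rpow, hs, ht]
  · simp [← Real.rpow_add h, hst]

theorem mrpow_posSemidef {A : Matrix m m ℂ} (hA : A.PosSemidef) (t : ℝ) :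
    (mrpow A t).PosSemidef := by
  rw [mrpow_eq_cfc hA.1, ← nonneg_iff_posSemidef]
  exact cfc_nonneg fun x hx =>
    Real.rpow_nonneg (spectrum_nonneg_of_nonneg (nonneg_iff_posSemidef.2 hA) hx) t

/-- The Löwner–Heinz inequality for `mrpow`. -/
theorem mrpow_le_mrpow {A B : Matrix m m ℂ} (hA : A.PosSemidef) (hAB : (B - A).PosSemidef)
    {t : ℝ} (ht : t ∈ Set.Icc (0 : ℝ) 1) : (mrpow B t - mrpow A t).PosSemidef := by
  have hB : B.PosSemidef := by simpa using hAB.add hA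
  have h : A ^ t ≤ B ^ t := CFC.rpow_le_rpow ht hAB
  rw [CFC.rpow_eq_cfc_real (nonneg_iff_posSemidef.2 hA),
    CFC.rpow_eq_cfc_real (nonneg_iff_posSemidef.2 hB)] at h
  rw [mrpow_eq_cfc hA.1, mrpow_eq_cfc hB.1]
  exact h

theorem trace_mul_nonneg {A B : Matrix m m ℂ} (hA : A.PosSemidef) (hB : B.PosSemidef) :
    0 ≤ ((A * B).trace).re := by
  obtain ⟨C, rfl⟩ := CStarAlgebra.nonneg_iff_eq_star_mul_self.1 (nonneg_iff_posSemidef.2 hA)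
  have h := (hB.mul_mul_conjTranspose_same C).trace_nonneg
  rw [Matrix.mul_assoc, trace_mul_comm]
  rw [star_eq_conjTranspose] 
  exact (Complex.le_def.1 h).1

/-- The spectral projection `E` of `D` onto `(0, ∞)`: here `D * E` is the positive part of `D` and
`D * E - D` its negative part. -/
theorem exists_posPart_projection {D : Matrix m m ℂ} (hD : D.IsHermitian) :
    ∃ E : Matrix m m ℂ, E.IsHermitian ∧ E * E = E ∧ (D * E).PosSemidef ∧
      (D * E - D).PosSemidef := by
  have hD' : IsSelfAdjoint D := hD
  let e : ℝ → ℝ := fun x => if 0 < x then 1 else 0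
  have c := continuousOn_matrix_spectrum D
  have hDE : D * cfc e D = cfc (fun x => x * e x) D := by
    rw [cfc_mul _ _ D (c _) (c _), cfc_id' ℝ D]
  refine ⟨cfc e D, cfc_predicate e D, ?_, ?_, ?_⟩
  · rw [← cfc_mul _ _ D (c _) (c _)]
    exact cfc_congr fun x _ => by simp [e]
  · rw [hDE, ← nonneg_iff_posSemidef]
    refine cfc_nonneg fun x _ => ?_
    by_cases h : 0 < x
    · simp [e, h, h.le]
    · simp [e, h]
  · have : D * cfc e D - D = cfc (fun x => x * e x - x) D := by
      rw [cfc_sub _ _ D (c _) (c _), cfc_id' ℝ D, hDE]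
    rw [this, ← nonneg_iff_posSemidef]
    refine cfc_nonneg fun x _ => ?_
    by_cases h : 0 < x
    · simp [e, h]
    · simp [e, h, not_lt.1 h]

/-- If `0 ≤ A ≤ T`, the kernel of `T` is contained in the kernel of `A`. -/
theorem mul_eq_zero_of_le {A T X : Matrix m m ℂ} (hA : A.PosSemidef) (hAT : (T - A).PosSemidef)
    (hTX : T * X = 0) : A * X = 0 := by
  obtain ⟨C, rfl⟩ := CStarAlgebra.nonneg_iff_eq_star_mul_self.1 (nonneg_iff_posSemidef.2 hA)
  have h1 := hAT.conjTranspose_mul_mul_same X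
  rw [Matrix.mul_assoc, Matrix.sub_mul, hTX, zero_sub, star_eq_conjTranspose] at h1
  have h3 : Xᴴ * -(Cᴴ * C * X) = -((C * X)ᴴ * (C * X)) := by
    simp [Matrix.mul_assoc]
  rw [h3] at h1
  -- `Xᴴ (T - A) X = -(C X)ᴴ (C X)` is positive semidefinite, which forces `C X = 0`.
  have h4 : (C * X)ᴴ * (C * X) = 0 := le_antisymm (by
    have := nonneg_iff_posSemidef.2 h1
    simpa using this) (nonneg_iff_posSemidef.2 (posSemidef_conjTranspose_mul_self _))
  rw [conjTranspose_mul_self_eq_zero] at h4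
  rw [Matrix.mul_assoc, h4, Matrix.mul_zero]

/-- Audenaert's inequality, with the positive part of `A - B` replaced by any positive semidefinite
`P ≥ A - B`. -/
theorem trace_le_of_posPart {A B P : Matrix m m ℂ} (hA : A.PosSemidef) (hB : B.PosSemidef)
    (hP : P.PosSemidef) (hAB : (P - (A - B)).PosSemidef) {s : ℝ} (hs : s ∈ Set.Ioo (0 : ℝ) 1) :
    A.trace.re - P.trace.re ≤ ((mrpow A (1 - s) * mrpow B s).trace).re := by
  obtain ⟨h0, h1⟩ := hs
  set C := B + P with hC
  have hCp : C.PosSemidef := hB.add hP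
  have hCA : (C - A).PosSemidef := by convert hAB using 1; rw [hC]; abel
  have hCB : (C - B).PosSemidef := by simpa [hC] using hP
  -- The three inequalities add up to `Tr A - Tr[A^{1-s} B^s] ≤ Tr C - Tr B`: in
  -- `Tr[A^{1-s} (A^s - B^s)]` one replaces `A^s` by `C^s`, then `A^{1-s}` by `C^{1-s}`, and finally
  -- `C^{1-s} B^s` by `B`.
  have i1 := trace_mul_nonneg (mrpow_posSemidef hA (1 - s))
    (mrpow_le_mrpow hA hCA ⟨h0.le, h1.le⟩)
  have i2 := trace_mul_nonneg
    (mrpow_le_mrpow hA hCA (t := 1 - s) ⟨by linarith, by linarith⟩)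
    (mrpow_le_mrpow hB hCB ⟨h0.le, h1.le⟩)
  have i3 := trace_mul_nonneg
    (mrpow_le_mrpow hB hCB (t := 1 - s) ⟨by linarith, by linarith⟩) (mrpow_posSemidef hB s)
  have e {M : Matrix m m ℂ} (hM : M.PosSemidef) : mrpow M (1 - s) * mrpow M s = M :=
    mrpow_mul_mrpow hM (by linarith) h0.ne' (by ring)
  simp only [Matrix.mul_sub, Matrix.sub_mul, e hA, e hB, e hCp, trace_sub, Complex.sub_re]
    at i1 i2 i3
  have : C.trace.re = B.trace.re + P.trace.re := by simp [hC]
  linarith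

/-- The pretty-good-measurement quantity is at most the error of the two-outcome test given by any
orthogonal projection `E`. -/
theorem trace_pgm_le {A B E : Matrix m m ℂ} (hA : A.PosSemidef) (hB : B.PosSemidef)
    (hE : E.IsHermitian) (hEE : E * E = E) :
    ((A * mrpow (A + B) (-(1/2)) * B * mrpow (A + B) (-(1/2))).trace).re ≤
      A.trace.re - ((A - B) * E).trace.re := by
  set T := A + B with hT
  have hTp : T.PosSemidef := hA.add hB
  set R := mrpow T (-(1/2)) with hR
  set S := mrpow T (1/2) with hS
  have hSp : S.PosSemidef := mrpow_posSemidef hTp _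
  have hRp : R.PosSemidef := mrpow_posSemidef hTp _
  have hSS : S * S = T := mrpow_mul_mrpow hTp (by norm_num) (by norm_num) (by norm_num)
  have hSR : S * R = R * S := by
    rw [hS, hR, mrpow_eq_cfc hTp.1, mrpow_eq_cfc hTp.1]
    exact cfc_commute_cfc _ _ T
  have hSRS : S * R * S = S := by
    have c := continuousOn_matrix_spectrum T
    rw [hS, hR, mrpow_eq_cfc hTp.1, mrpow_eq_cfc hTp.1, ← cfc_mul _ _ T (c _) (c _),
      ← cfc_mul _ _ T (c _) (c _)]
    refine cfc_congr fun x hx => ?_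
    have hx0 : 0 ≤ x := spectrum_nonneg_of_nonneg (nonneg_iff_posSemidef.2 hTp) hx
    rcases hx0.eq_or_lt with rfl | h
    · simp
    · simp [← Real.rpow_add h]
  -- `S * R` is the projection onto the support of `T`; `A ≤ T` is supported there.
  have hTX : T * (1 - S * R) = 0 := by
    rw [← hSS, Matrix.mul_sub, Matrix.mul_one, hSR, Matrix.mul_assoc, ← Matrix.mul_assoc S R S,
      hSRS, sub_self]
  have hAQ : A * (S * R) = A := by
    have := mul_eq_zero_of_le hA (by simpa [hT] using hB) hTX
    rw [Matrix.mul_sub, Matrix.mul_one, sub_eq_zero] at this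
    exact this.symm
  have hQA : S * R * A = A := by
    have := congrArg conjTranspose hAQ
    rw [conjTranspose_mul, conjTranspose_mul, hA.1.eq, hSp.1.eq, hRp.1.eq, ← hSR] at this
    exact this
  set P := R * A * R with hP
  have hPh : P.IsHermitian := by
    rw [hP, IsHermitian, conjTranspose_mul, conjTranspose_mul, hA.1.eq, hRp.1.eq,
      Matrix.mul_assoc]
  have hSPS : S * P * S = A := by
    calc S * P * S = (S * R * A) * (R * S) := by simp only [hP, Matrix.mul_assoc]
      _ = A := by rw [hQA, ← hSR, hAQ]
  -- `⟨P - E, P - E⟩ ≥ 0` for the form `⟨X, Y⟩ = Tr[S X S Y]`.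
  have j1 : 0 ≤ (S * (P - E) * S * (P - E)).trace.re := by
    have hX : (P - E).IsHermitian := hPh.sub hE
    have := trace_mul_nonneg hSp (hSp.conjTranspose_mul_mul_same (P - E))
    rw [hX.eq] at this
    simpa only [Matrix.mul_assoc] using this
  -- `⟨E, 1 - E⟩ ≥ 0`, so that `⟨E, E⟩ ≤ Tr[T E]`.
  have j2 : 0 ≤ (S * E * S * (1 - E)).trace.re := by
    have hF : (1 - E).IsHermitian := isHermitian_one.sub hE
    have hFp : (1 - E).PosSemidef := by
      have := posSemidef_conjTranspose_mul_self (1 - E)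
      rw [hF.eq] at this
      convert this using 1
      simp [Matrix.mul_sub, Matrix.sub_mul, hEE]
    have hEp : E.PosSemidef := by
      have := posSemidef_conjTranspose_mul_self E
      rwa [hE.eq, hEE] at this
    have h := hEp.conjTranspose_mul_mul_same S
    rw [hSp.1.eq] at h
    exact trace_mul_nonneg h hFp
  have k1 : (S * E * S * P).trace = (A * E).trace := by
    rw [← hSPS, trace_mul_comm (S * E * S) P, trace_mul_comm (S * P * S) E]
    rw [trace_mul_comm P, trace_mul_comm E]
    rw [show S * E * S * P = (S * E) * (S * P) by simp only [Matrix.mul_assoc], trace_mul_comm]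
    simp only [Matrix.mul_assoc]
  have k2 : (S * E * S).trace = (T * E).trace := by
    rw [trace_mul_comm, ← Matrix.mul_assoc, hSS]
  have k3 : (A * R * B * R).trace = A.trace - (A * P).trace := by
    have hB' : B = S * S - A := by rw [hSS, hT]; abel
    have : A * R * B * R = A - A * P := by
      calc A * R * B * R = A * ((R * S) * (S * R)) - A * (R * A * R) := by
            rw [hB']; simp only [Matrix.mul_sub, Matrix.sub_mul, Matrix.mul_assoc]
        _ = A - A * P := by rw [← hSR, ← Matrix.mul_assoc, hAQ, hAQ]
    rw [this, trace_sub]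
  have k4 : S * (P - E) * S = A - S * E * S := by
    rw [Matrix.mul_sub, Matrix.sub_mul, hSPS]
  rw [k4] at j1
  simp only [Matrix.mul_sub, Matrix.sub_mul, trace_sub, Complex.sub_re, k1, k2, Matrix.mul_one]
    at j1 j2
  have k5 : (T * E).trace.re = (A * E).trace.re + (B * E).trace.re := by
    simp [hT, Matrix.add_mul]
  rw [k3, Complex.sub_re, Matrix.sub_mul, trace_sub, Complex.sub_re]
  linarith

end

/-- Lemma: a trace inequality.
For nonzero positive semidefinite operators `K, L` on a finite-dimensional complex
Hilbert space and `s ∈ (0,1)`,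
`Tr[K (K+L)^{-1/2} L (K+L)^{-1/2}] ≤ Tr[K^{1-s} L^s]`. -/
theorem trace_inequality {d : ℕ} (K L : Matrix (Fin d) (Fin d) ℂ)
    (hK : K.PosSemidef) (hL : L.PosSemidef) (hK0 : K ≠ 0) (hL0 : L ≠ 0)
    (s : ℝ) (hs : s ∈ Set.Ioo (0 : ℝ) 1) :
    ((K * mrpow (K + L) (-(1/2)) * L * mrpow (K + L) (-(1/2))).trace).re ≤
      ((mrpow K (1 - s) * mrpow L s).trace).re := by
  obtain ⟨E, hE, hEE, hP, hPD⟩ := exists_posPart_projection (hK.1.sub hL.1)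
  exact (trace_pgm_le hK hL hE hEE).trans (trace_le_of_posPart hK hL hP hPD hs)

end
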